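/- arXiv:2501.07907 — 2 statements merged into one kernel-verified Lean document; each statement's English description precedes it below -/
import Mathlib

section
/- Let a, b, c, g be nonzero integers such that g divides each of a, b and c, and such that ν₂(c) = ν₂(g). Set h = gcd(a, b, c). Then h² divides a·b·c, g divides a·b, and the integers (a·b·c)/h² and (a·b)/g are congruent modulo 2. -/
/-- Let `a, b, c, g` be nonzero integers such that `g` divides each of `a`, `b` and `c`, and
such that `ν₂(c) = ν₂(g)`. Set `h = gcd(a, b, c)`. Then `h²` divides `a·b·c`, `g` divides
`a·b`, and the integers `(a·b·c)/h²` and `(a·b)/g` are congruent modulo 2. -/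
theorem stmt_2 (a b c g : ℤ) (ha : a ≠ 0) (hb : b ≠ 0) (hc : c ≠ 0) (hg : g ≠ 0)
    (hga : g ∣ a) (hgb : g ∣ b) (hgc : g ∣ c)
    (hval : padicValInt 2 c = padicValInt 2 g)
    (h : ℤ) (hdef : h = (Int.gcd a (Int.gcd b c) : ℤ)) :
    h ^ 2 ∣ a * b * c ∧ g ∣ a * b ∧ a * b * c / h ^ 2 ≡ a * b / g [ZMOD 2] := by
  have hha : h ∣ a := hdef ▸ Int.gcd_dvd_left ..
  have hhbc : h ∣ (Int.gcd b c : ℤ) := hdef ▸ Int.gcd_dvd_right ..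
  have hhb : h ∣ b := hhbc.trans (Int.gcd_dvd_left ..)
  have hhc : h ∣ c := hhbc.trans (Int.gcd_dvd_right ..)
  have hgh : g ∣ h := hdef ▸ Int.dvd_coe_gcd hga (Int.dvd_coe_gcd hgb hgc)
  clear hdef hhbc
  obtain ⟨k, rfl⟩ := hgh
  obtain ⟨x, rfl⟩ := hha
  obtain ⟨y, rfl⟩ := hhb
  obtain ⟨m, rfl⟩ := hhc
  have hkm : k * m ≠ 0 := by
    intro h0
    exact hc (by rw [mul_assoc, h0, mul_zero])
  have hk : k ≠ 0 := left_ne_zero_of_mul hkm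
  have hodd : ¬ (2 : ℤ) ∣ k * m := by
    intro hd
    haveI : Fact (Nat.Prime 2) := ⟨Nat.prime_two⟩
    rw [mul_assoc, padicValInt.mul hg hkm] at hval
    have h1 := (padicValInt_dvd_iff (p := 2) 1 (k * m)).1 (by simpa using hd)
    rcases h1 with h1 | h1
    · exact hkm h1
    · omega
  have e1 : g * k * x * (g * k * y) * (g * k * m) = (g * k) ^ 2 * (x * y * (g * (k * m))) := by ring
  have e2 : g * k * x * (g * k * y) = g * (k * x * (g * k * y)) := by ring
  refine ⟨⟨_, e1⟩, hga.mul_right _, ?_⟩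
  rw [e1, e2, Int.mul_ediv_cancel_left _ (pow_ne_zero 2 (mul_ne_zero hg hk)),
    Int.mul_ediv_cancel_left _ hg]
  have hko : Odd k := by
    rw [← Int.not_even_iff_odd, even_iff_two_dvd]
    exact fun hd => hodd (hd.mul_right _)
  have hmo : Odd m := by
    rw [← Int.not_even_iff_odd, even_iff_two_dvd]
    exact fun hd => hodd (hd.mul_left _)
  obtain ⟨u, rfl⟩ := hko
  obtain ⟨v, rfl⟩ := hmo
  apply Int.ModEq.symm
  rw [Int.modEq_iff_dvd]
  exact ⟨x * y * g * (2 * u + 1) * (v - u), by ring⟩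
end

section
/- Let n ≥ 1 and let λ₁, …, λ_{n+2} be primitive vectors in ℤ² (each having coprime coordinates) such that det(λᵢ, λ_{i+1}) ≠ 0 for all 1 ≤ i ≤ n+1 and det(λ₁, λ_{n+2}) ≠ 0. Let g = gcd{det(λᵢ, λⱼ) : 1 ≤ i < j ≤ n+2}. Then for every prime p there exists an index i ∈ {1, …, n+2} such that ν_p(d_{i−1,i}) = ν_p(g), where d_{i−1,i} = det(λ_{i−1}, λᵢ) for 2 ≤ i ≤ n+2 and d_{0,1} is interpreted as det(λ₁, λ_{n+2}). -/
theorem det_trans_aux (m : ℤ) (a b c : ℤ × ℤ) (hb : IsCoprime b.1 b.2)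
    (h1 : m ∣ a.1 * b.2 - a.2 * b.1) (h2 : m ∣ b.1 * c.2 - b.2 * c.1) :
    m ∣ a.1 * c.2 - a.2 * c.1 := by
  obtain ⟨u, v, huv⟩ := hb
  obtain ⟨x, hx⟩ := h1
  obtain ⟨y, hy⟩ := h2
  refine ⟨u * (a.1 * y + c.1 * x) + v * (a.2 * y + c.2 * x), ?_⟩
  linear_combination (-(a.1 * c.2 - a.2 * c.1)) * huv + (u * a.1 + v * a.2) * hy
    + (u * c.1 + v * c.2) * hx

/-- Let `n ≥ 1` and let `λ₁, …, λ_{n+2}` be primitive vectors in `ℤ²` (each having coprime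
coordinates) such that all determinants of cyclically adjacent vectors are nonzero. Let `g`
be the gcd of all the determinants `det(λᵢ, λⱼ)` for `i < j`. Then for every prime `p` there
is an index `i` such that the determinant of the adjacent vectors at the corresponding vertex
has the same `p`-adic valuation as `g`. -/
theorem stmt_8 (n : ℕ) (hn : 1 ≤ n) (lam : Fin (n + 2) → ℤ × ℤ)
    (hprim : ∀ i, IsCoprime (lam i).1 (lam i).2)
    (hadj : ∀ i : Fin (n + 2),
      (lam i).1 * (lam (i + 1)).2 - (lam i).2 * (lam (i + 1)).1 ≠ 0)
    (g : ℤ)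
    (hgdef : g = Finset.gcd
      (Finset.univ.filter fun q : Fin (n + 2) × Fin (n + 2) => q.1 < q.2)
      (fun q => (lam q.1).1 * (lam q.2).2 - (lam q.1).2 * (lam q.2).1))
    (p : ℕ) (hp : p.Prime) :
    ∃ i : Fin (n + 2),
      padicValInt p ((lam i).1 * (lam (i + 1)).2 - (lam i).2 * (lam (i + 1)).1)
        = padicValInt p g := by
  have : Fact p.Prime := ⟨hp⟩
  have hg : ∀ i : Fin (n + 2), g ∣ (lam i).1 * (lam (i + 1)).2 - (lam i).2 * (lam (i + 1)).1 := by
    intro i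
    rcases lt_trichotomy i (i + 1) with h | h | h
    · rw [hgdef]
      exact Finset.gcd_dvd (f := fun q : Fin (n + 2) × Fin (n + 2) =>
        (lam q.1).1 * (lam q.2).2 - (lam q.1).2 * (lam q.2).1) (b := (i, i + 1)) (by simpa using h)
    · exact absurd (by rw [← h]; ring) (hadj i)
    · have : g ∣ (lam (i + 1)).1 * (lam i).2 - (lam (i + 1)).2 * (lam i).1 := by
        rw [hgdef]
        exact Finset.gcd_dvd (f := fun q : Fin (n + 2) × Fin (n + 2) =>
          (lam q.1).1 * (lam q.2).2 - (lam q.1).2 * (lam q.2).1) (b := (i + 1, i))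
          (Finset.mem_filter.2 ⟨Finset.mem_univ _, h⟩)
      obtain ⟨k, hk⟩ := this
      exact ⟨-k, by linear_combination -hk⟩
  have hg0 : g ≠ 0 := by
    intro h
    have := hg 0
    rw [h, zero_dvd_iff] at this
    exact hadj 0 this
  by_contra hcon
  push Not at hcon
  set M : ℤ := (p : ℤ) ^ (padicValInt p g + 1) with hM
  have hd : ∀ i : Fin (n + 2), M ∣ (lam i).1 * (lam (i + 1)).2 - (lam i).2 * (lam (i + 1)).1 := by
    intro i
    rw [hM, padicValInt_dvd_iff]
    right
    have h1 : (p : ℤ) ^ padicValInt p g ∣ g := padicValInt_dvd g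
    have h2 := (padicValInt_dvd_iff _ _).1 (h1.trans (hg i))
    have h3 := hcon i
    rcases h2 with h2 | h2
    · exact absurd h2 (hadj i)
    · omega
  have h0 : ∀ j : Fin (n + 2), M ∣ (lam 0).1 * (lam j).2 - (lam 0).2 * (lam j).1 := by
    intro j
    induction j using Fin.induction with
    | zero => exact ⟨0, by ring⟩
    | succ i ih =>
      have := hd i.castSucc
      rw [Fin.coeSucc_eq_succ] at this
      exact det_trans_aux M _ _ _ (hprim _) ih this
  have hMg : M ∣ g := by
    rw [hgdef]
    refine Finset.dvd_gcd fun q _ => ?_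
    refine det_trans_aux M _ _ _ (hprim 0) ?_ (h0 q.2)
    obtain ⟨k, hk⟩ := h0 q.1
    exact ⟨-k, by linear_combination -hk⟩
  rw [hM, padicValInt_dvd_iff] at hMg
  rcases hMg with h | h
  · exact hg0 h
  · omega
end
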